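/- Let p be a prime and let S be a non-empty set without tangents in PG(2,p) with |S| < 2p. Then every line L of PG(2,p) contains at most |S|/2 − (p−5)/4 points of S; that is, 4·|L ∩ S| ≤ 2|S| − p + 5 for every line L. -/

import Mathlib

/-!
`PG(2,F)`: points are the 1-dimensional subspaces of `F^3` (modelled as the
projectivization of `Fin 3 → F`), lines are the 2-dimensional subspaces.
-/

variable {F : Type*} [Field F]

/-- The points of `PG(2,F)`: 1-dimensional subspaces of `F^3`. -/
abbrev PGPoint (F : Type*) [Field F] := Projectivization F (Fin 3 → F)

/-- A line of `PG(2,F)` is a 2-dimensional subspace of `F^3`. -/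
def IsProjLine (F : Type*) [Field F] (L : Submodule F (Fin 3 → F)) : Prop :=
  Module.finrank F L = 2

/-- The set of projective points lying on the subspace `L`. -/
def pointsOn (L : Submodule F (Fin 3 → F)) : Set (PGPoint F) :=
  {P | P.submodule ≤ L}

/-- `S` is a set without tangents: no line of `PG(2,F)` meets `S` in exactly one point. -/
def NoTangents (S : Set (PGPoint F)) : Prop :=
  ∀ L : Submodule F (Fin 3 → F), IsProjLine F L →
    ¬ (∃! P : PGPoint F, P ∈ S ∩ pointsOn L)

/-!
Let `q` be the order of the field, a prime. Suppose that `L` meets `S` in too many points, and take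
`L` as the line at infinity, with a point of `L` outside `S` as the vertical direction. A direction
of a point of `S` on `L` is *blocked*: every affine line of that slope meets the set `U` of affine
points of `S`. For a blocked slope `y` the Rédei polynomial `R_y = ∏ (X + a y - b)` over the points
`(a, b)` of `U` is divisible by `X ^ q - X`, so its coefficients in a range of degrees below `q`
vanish. These coefficients are polynomials in `y` of low degree, and there are many blocked slopes,
so they vanish for every `y`. Hence `R_y = X ^ q * f + h` with `f` and `h` of small degree, and a
Wronskian argument shows that either every line of slope `y` meets `U` or one of them lies in `U`.
Applied to a slope whose point at infinity is not in `S`, either case forces `2 * q ≤ #S`: in the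
first each of the `q` lines contains at least two points of `U`, in the second a line contains `q`
points of `S`.
-/

open Polynomial UniqueFactorizationMonoid

section Polynomial

theorem natDegree_eq_zero_of_derivative_eq_zero_of_lt {A : Type*} [CommSemiring A]
    [NoZeroDivisors A] {p : ℕ} [CharP A p] {f : A[X]} (hf : f.natDegree < p)
    (hf' : derivative f = 0) : f.natDegree = 0 := by
  have hdeg : f.natDegree = (contract p f).natDegree * p := by
    rw [← natDegree_expand, expand_contract p hf' (Nat.ne_zero_of_lt hf)]
  by_contra hne
  exact hf.not_ge (Nat.le_of_dvd (Nat.pos_of_ne_zero hne) ⟨_, hdeg.trans (mul_comm _ _)⟩)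

theorem exists_eq_C_mul_of_wronskian_eq_zero {p : ℕ} [CharP F p] {f h : F[X]} (hf0 : f ≠ 0)
    (hf : f.natDegree < p) (hh : h.natDegree < p) (hw : wronskian f h = 0) :
    ∃ c, h = C c * f := by
  classical
  let := EuclideanDomain.gcdMonoid F[X]
  obtain ⟨a, b, ha, hb, hunit⟩ := extract_gcd f h
  have hab : IsCoprime a b := (gcd_isUnit_iff a b).mp hunit
  set g := GCDMonoid.gcd f h
  have hg0 : g ≠ 0 := fun hg => hf0 (by rw [ha, hg, zero_mul])
  have hwab : wronskian a b = 0 := by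
    have hgw : g ^ 2 * wronskian a b = wronskian f h := by
      rw [ha, hb]
      simp only [wronskian, derivative_mul]
      ring
    exact (mul_eq_zero.mp (hgw.trans hw)).resolve_left (pow_ne_zero 2 hg0)
  have natDegree_lt_of_mul {r s : F[X]} (hs : s = g * r) (hsp : s.natDegree < p) :
      r.natDegree < p := by
    obtain rfl | hr := eq_or_ne r 0
    · simpa using (Nat.zero_le _).trans_lt hsp
    · exact (natDegree_le_of_dvd (Dvd.intro_left g hs.symm) (hs ▸ mul_ne_zero hg0 hr)).trans_lt hsp
  obtain ⟨ha', hb'⟩ := hab.wronskian_eq_zero_iff.mp hwab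
  obtain ⟨α, rfl⟩ := natDegree_eq_zero.mp <|
    natDegree_eq_zero_of_derivative_eq_zero_of_lt (natDegree_lt_of_mul ha hf) ha'
  obtain ⟨β, rfl⟩ := natDegree_eq_zero.mp <|
    natDegree_eq_zero_of_derivative_eq_zero_of_lt (natDegree_lt_of_mul hb hh) hb'
  have hα : α ≠ 0 := fun h0 => hf0 (by rw [ha, h0, C_0, mul_zero])
  refine ⟨β / α, ?_⟩
  rw [hb, ha, mul_left_comm, ← C_mul, div_mul_cancel₀ β hα]

variable [Fintype F]

theorem splits_X_pow_card_sub_X : (X ^ Fintype.card F - X : F[X]).Splits := by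
  rw [splits_iff_card_roots, FiniteField.roots_X_pow_card_sub_X,
    FiniteField.X_pow_card_sub_X_natDegree_eq F Fintype.one_lt_card]
  rfl

theorem X_pow_card_sub_X_dvd_iff {R : F[X]} :
    X ^ Fintype.card F - X ∣ R ↔ ∀ x, R.IsRoot x := by
  obtain rfl | hR := eq_or_ne R 0
  · simp
  rw [splits_X_pow_card_sub_X.dvd_iff_roots_le_roots
    (FiniteField.X_pow_card_sub_X_ne_zero F Fintype.one_lt_card) hR,
    FiniteField.roots_X_pow_card_sub_X, Multiset.le_iff_subset Finset.univ.nodup]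
  simp [Multiset.subset_iff, hR]

theorem coeff_eq_zero_of_X_pow_card_sub_X_dvd {R : F[X]} (hR : X ^ Fintype.card F - X ∣ R)
    {n : ℕ} (hn : n < Fintype.card F) (hRn : R.natDegree + 1 < n + Fintype.card F) :
    R.coeff n = 0 := by
  obtain ⟨f, rfl⟩ := hR
  obtain rfl | hf := eq_or_ne f 0
  · simp
  rw [natDegree_mul (FiniteField.X_pow_card_sub_X_ne_zero F Fintype.one_lt_card) hf,
    FiniteField.X_pow_card_sub_X_natDegree_eq F Fintype.one_lt_card] at hRn
  obtain ⟨n, rfl⟩ := Nat.exists_eq_add_one_of_ne_zero (n := n) (by omega)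
  rw [sub_mul, coeff_sub, coeff_X_pow_mul', if_neg hn.not_ge, coeff_X_mul,
    coeff_eq_zero_of_natDegree_lt (by omega), sub_zero]

theorem radical_dvd_X_pow_card_sub_X_of_splits [DecidableEq F] {R : F[X]} (hR : R.Splits) :
    radical R ∣ X ^ Fintype.card F - X := by
  obtain rfl | hR0 := eq_or_ne R 0
  · simp
  refine (exists_dvd_pow_iff_radical_dvd hR0).mp ⟨R.natDegree, ?_⟩
  refine hR.dvd_of_roots_le_roots hR0 (Multiset.le_iff_count.mpr fun x => ?_)
  rw [roots_pow, FiniteField.roots_X_pow_card_sub_X, Multiset.count_nsmul,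
    Multiset.count_eq_one_of_mem Finset.univ.nodup (Finset.mem_univ x), mul_one]
  exact (Multiset.count_le_card _ _).trans (card_roots' R)

/-- The radical of `R = X ^ q * f + h` divides `X ^ q - X`, hence `R - (X ^ q - X) * f = X * f + h`,
while `R / radical R` divides the Wronskian of `f` and `R`, which is that of `f` and `h` because
`(X ^ q)' = 0`. -/
theorem dvd_X_mul_add_mul_wronskian {f h : F[X]} (hR : (X ^ Fintype.card F * f + h).Splits) :
    X ^ Fintype.card F * f + h ∣ (X * f + h) * wronskian f h := by
  classical
  set R := X ^ Fintype.card F * f + h with hRdef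
  have hw : wronskian f R = wronskian f h := by
    have hder : derivative R = X ^ Fintype.card F * derivative f + derivative h := by
      simp [hRdef, derivative_X_pow]
    rw [wronskian, wronskian, hder, hRdef]
    ring
  rw [← EuclideanDomain.radical_mul_divRadical (a := R)]
  refine mul_dvd_mul ?_ (hw ▸ divRadical_dvd_wronskian_right f R)
  have hRf : X * f + h = R - (X ^ Fintype.card F - X) * f := by rw [hRdef]; ring
  rw [hRf]
  exact dvd_sub radical_dvd_self ((radical_dvd_X_pow_card_sub_X_of_splits hR).mul_right f)

theorem X_mul_add_eq_zero_or_wronskian_eq_zero {f h : F[X]}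
    (hR : (X ^ Fintype.card F * f + h).Splits)
    (hdeg : max (f.natDegree + 1) h.natDegree + h.natDegree ≤ Fintype.card F) :
    X * f + h = 0 ∨ wronskian f h = 0 := by
  by_contra! ⟨hne, hw⟩
  have hf : f ≠ 0 := by
    rintro rfl
    exact hw (wronskian_zero_left h)
  have hdegR : (X ^ Fintype.card F * f + h).natDegree = f.natDegree + Fintype.card F := by
    rw [natDegree_add_eq_left_of_natDegree_lt] <;> rw [natDegree_X_pow_mul _ hf]
    omega
  have hle := natDegree_le_of_dvd (dvd_X_mul_add_mul_wronskian hR) (mul_ne_zero hne hw)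
  rw [natDegree_mul hne hw, hdegR] at hle
  have hlt := natDegree_wronskian_lt_add hw
  have hadd := natDegree_add_le (X * f) h
  rw [natDegree_X_mul hf] at hadd
  omega

theorem X_mul_add_eq_zero_or_exists_X_sub_C_pow_dvd {p : ℕ} [CharP F p] {f h : F[X]} (hf : f ≠ 0)
    (hfp : f.natDegree < p) (hhp : h.natDegree < p) (hR : (X ^ Fintype.card F * f + h).Splits)
    (hdeg : max (f.natDegree + 1) h.natDegree + h.natDegree ≤ Fintype.card F) :
    X * f + h = 0 ∨ ∃ c, (X - C c) ^ Fintype.card F ∣ X ^ Fintype.card F * f + h := by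
  refine (X_mul_add_eq_zero_or_wronskian_eq_zero hR hdeg).imp_right fun hw => ?_
  obtain ⟨c, rfl⟩ := exists_eq_C_mul_of_wronskian_eq_zero hf hfp hhp hw
  refine ⟨-c, f, ?_⟩
  have hpow : (X - C (-c)) ^ Fintype.card F = X ^ Fintype.card F + C c := by
    rw [← FiniteField.expand_card]
    simp
  rw [hpow, add_mul]

end Polynomial

section Redei

/-- The height at which the affine line of slope `y` through `P` meets the axis of second
coordinates; the lines of slope `y` are the fibres of `intercept y`. -/
def intercept (y : F) (P : F × F) : F :=
  P.2 - P.1 * y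

/-- The Rédei polynomial `∏ (X + a Y - b)` of a finite set of affine points `(a, b)`, specialised
at `Y = y`. -/
noncomputable def redeiPoly (U : Finset (F × F)) (y : F) : F[X] :=
  ∏ P ∈ U, (X - C (intercept y P))

theorem redeiPoly_monic (U : Finset (F × F)) (y : F) : (redeiPoly U y).Monic :=
  monic_prod_X_sub_C _ _

theorem redeiPoly_splits (U : Finset (F × F)) (y : F) : (redeiPoly U y).Splits :=
  Splits.prod fun _ _ => Splits.X_sub_C _

theorem natDegree_redeiPoly (U : Finset (F × F)) (y : F) : (redeiPoly U y).natDegree = U.card :=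
  natDegree_finsetProd_X_sub_C_eq_card _ _

theorem forall_isRoot_redeiPoly_iff {U : Finset (F × F)} {y : F} :
    (∀ x, (redeiPoly U y).IsRoot x) ↔ Set.SurjOn (intercept y) U Set.univ := by
  simp only [redeiPoly, isRoot_prod, root_X_sub_C, Set.SurjOn, Set.univ_subset_iff,
    Set.eq_univ_iff_forall, Set.mem_image, Finset.mem_coe]

theorem rootMultiplicity_redeiPoly [DecidableEq F] (U : Finset (F × F)) (y c : F) :
    (redeiPoly U y).rootMultiplicity c = {P ∈ U | intercept y P = c}.card := by
  have hroots : (redeiPoly U y).roots = U.val.map (intercept y) := by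
    rw [← roots_multiset_prod_X_sub_C (U.val.map (intercept y)), Multiset.map_map]
    rfl
  rw [← count_roots, hroots, Multiset.count_map]
  simp only [eq_comm (a := c)]
  rfl

theorem exists_natDegree_le_and_eval_eq_coeff_redeiPoly {U : Finset (F × F)} {n : ℕ}
    (hn : n ≤ U.card) :
    ∃ σ : F[X], σ.natDegree ≤ U.card - n ∧ ∀ y, σ.eval y = (redeiPoly U y).coeff n := by
  refine ⟨∑ T ∈ U.powersetCard (U.card - n), ∏ P ∈ T, (C P.1 * X - C P.2), ?_, fun y => ?_⟩
  · refine natDegree_sum_le_of_forall_le _ _ fun T hT => ?_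
    rw [← (Finset.mem_powersetCard.mp hT).2, Finset.card_eq_sum_ones]
    refine (natDegree_prod_le _ _).trans (Finset.sum_le_sum fun P _ => ?_)
    compute_degree
  · have hadd : redeiPoly U y = ∏ P ∈ U, (X + C (P.1 * y - P.2)) :=
      Finset.prod_congr rfl fun P _ => by rw [intercept, sub_eq_add_neg, ← C_neg, neg_sub]
    rw [hadd, Finset.prod_X_add_C_coeff _ _ hn, eval_finsetSum]
    simp [eval_prod]

variable [Fintype F]

/-- The coefficient of `X ^ n` is a polynomial in `y` of degree at most `#U - n`, and vanishes for
every `y ∈ D` because `X ^ q - X` then divides the Rédei polynomial. -/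
theorem coeff_redeiPoly_eq_zero {U : Finset (F × F)} {D : Finset F} (hDq : D.card < Fintype.card F)
    (hD : ∀ y ∈ D, Set.SurjOn (intercept y) U Set.univ) (y : F) {n : ℕ}
    (hUn : U.card - D.card < n) (hn : n < Fintype.card F) : (redeiPoly U y).coeff n = 0 := by
  obtain hnU | hnU := lt_or_ge U.card n
  · exact coeff_eq_zero_of_natDegree_lt (by rwa [natDegree_redeiPoly])
  obtain ⟨σ, hσdeg, hσ⟩ := exists_natDegree_le_and_eval_eq_coeff_redeiPoly hnU
  suffices σ = 0 by rw [← hσ, this, eval_zero]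
  refine eq_zero_of_natDegree_lt_card_of_eval_eq_zero' σ D (fun z hz => ?_) (by omega)
  rw [hσ]
  refine coeff_eq_zero_of_X_pow_card_sub_X_dvd ?_ hn ?_
  · exact X_pow_card_sub_X_dvd_iff.mpr (forall_isRoot_redeiPoly_iff.mpr (hD z hz))
  · rw [natDegree_redeiPoly]
    omega

theorem natDegree_redeiPoly_modByMonic_le {U : Finset (F × F)} {D : Finset F}
    (hDq : D.card < Fintype.card F) (hD : ∀ y ∈ D, Set.SurjOn (intercept y) U Set.univ) (y : F) :
    (redeiPoly U y %ₘ X ^ Fintype.card F).natDegree ≤ U.card - D.card := by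
  refine natDegree_le_iff_coeff_eq_zero.mpr fun n hn => ?_
  obtain hnq | hnq := lt_or_ge n (Fintype.card F)
  · have hcoeff := coeff_redeiPoly_eq_zero hDq hD y hn hnq
    rwa [← modByMonic_add_div (redeiPoly U y) (X ^ Fintype.card F), coeff_add, coeff_X_pow_mul',
      if_neg hnq.not_ge, add_zero] at hcoeff
  · refine coeff_eq_zero_of_degree_lt ((degree_modByMonic_lt _ (monic_X_pow _)).trans_le ?_)
    rw [degree_X_pow]
    exact_mod_cast hnq

theorem mem_of_card_le_card_filter_intercept [DecidableEq F] {U : Finset (F × F)} {y c : F}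
    (h : Fintype.card F ≤ {P ∈ U | intercept y P = c}.card) {P : F × F}
    (hP : intercept y P = c) : P ∈ U := by
  have hsub : ∀ {P : F × F}, intercept y P = c →
      P ∈ Finset.univ.image fun a : F => (a, c + a * y) := by
    rintro ⟨a, b⟩ rfl
    simp [intercept]
  have heq : {P ∈ U | intercept y P = c} = Finset.univ.image fun a : F => (a, c + a * y) :=
    Finset.eq_of_subset_of_card_le (fun P hP => hsub (Finset.mem_filter.mp hP).2)
      (Finset.card_image_le.trans h)
  exact (Finset.mem_filter.mp (heq ▸ hsub hP)).1

theorem surjOn_intercept_or_exists_forall_mem (hq : (Fintype.card F).Prime)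
    {U : Finset (F × F)} {D : Finset F} (hU : Fintype.card F ≤ U.card)
    (hUD : 2 * U.card ≤ 2 * D.card + Fintype.card F)
    (hD : ∀ y ∈ D, Set.SurjOn (intercept y) U Set.univ) (y : F) :
    Set.SurjOn (intercept y) U Set.univ ∨ ∃ c, ∀ P, intercept y P = c → P ∈ U := by
  classical
  by_cases hy : y ∈ D
  · exact .inl (hD y hy)
  have hDq : D.card < Fintype.card F := Finset.card_lt_univ_of_notMem hy
  have : Fact (Fintype.card F).Prime := ⟨hq⟩
  have : CharP F (Fintype.card F) := charP_of_card_eq_prime rfl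
  set R := redeiPoly U y
  set f := R /ₘ X ^ Fintype.card F
  set h := R %ₘ X ^ Fintype.card F
  have hR : X ^ Fintype.card F * f + h = R := by rw [add_comm, modByMonic_add_div]
  have hRdeg : R.natDegree = U.card := natDegree_redeiPoly U y
  have hfdeg : f.natDegree = U.card - Fintype.card F := by
    rw [natDegree_divByMonic _ (monic_X_pow _), hRdeg, natDegree_X_pow]
  have hf0 : f ≠ 0 := by
    rw [Ne, divByMonic_eq_zero_iff (monic_X_pow _), degree_X_pow,
      degree_eq_natDegree (redeiPoly_monic U y).ne_zero, hRdeg]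
    exact_mod_cast hU.not_gt
  have hhdeg : h.natDegree ≤ U.card - D.card := natDegree_redeiPoly_modByMonic_le hDq hD y
  have hq1 := hq.one_lt
  obtain hzero | ⟨c, hc⟩ := X_mul_add_eq_zero_or_exists_X_sub_C_pow_dvd hf0 (h := h) (by omega)
    (by omega) (hR ▸ redeiPoly_splits U y) (by omega)
  · refine .inl (forall_isRoot_redeiPoly_iff.mp fun x => ?_)
    change R.eval x = 0
    simpa [← hR, FiniteField.pow_card] using congr_arg (eval x) hzero
  · refine .inr ⟨c, fun P hP => mem_of_card_le_card_filter_intercept ?_ hP⟩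
    rw [← rootMultiplicity_redeiPoly U y c, le_rootMultiplicity_iff (redeiPoly_monic U y).ne_zero]
    rwa [hR] at hc

end Redei

section Coordinates

theorem mk_mem_pointsOn {L : Submodule F (Fin 3 → F)} {v : Fin 3 → F} (hv : v ≠ 0) :
    Projectivization.mk F v hv ∈ pointsOn L ↔ v ∈ L := by
  change (Projectivization.mk F v hv).submodule ≤ L ↔ v ∈ L
  rw [Projectivization.submodule_mk, Submodule.span_singleton_le_iff_mem]

theorem isProjLine_ker {φ : Module.Dual F (Fin 3 → F)} (hφ : φ ≠ 0) : IsProjLine F φ.ker := by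
  have := Module.Dual.finrank_ker_add_one_of_ne_zero hφ
  rw [Module.finrank_fin_fun] at this
  exact Nat.succ_injective this

theorem exists_isProjLine_mem_pointsOn (P : PGPoint F) :
    ∃ L, IsProjLine F L ∧ P ∈ pointsOn L := by
  have hP : P.submodule < ⊤ := by
    refine lt_top_iff_ne_top.mpr fun h => ?_
    have := P.finrank_submodule
    rw [h, finrank_top, Module.finrank_fin_fun] at this
    omega
  obtain ⟨φ, hφ, hle⟩ := Submodule.exists_le_ker_of_lt_top _ hP
  exact ⟨φ.ker, isProjLine_ker hφ, hle⟩

theorem ncard_pointsOn [Fintype F] {L : Submodule F (Fin 3 → F)} (hL : IsProjLine F L) :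
    (pointsOn L).ncard = Fintype.card F + 1 := by
  have hinj := Projectivization.map_injective L.subtype L.subtype_injective
  have hrange : pointsOn L = Set.range (Projectivization.map L.subtype L.subtype_injective) := by
    ext P
    induction P using Projectivization.ind with | h v hv => ?_
    rw [mk_mem_pointsOn]
    constructor
    · intro hvL
      exact ⟨.mk F ⟨v, hvL⟩ (by simpa using hv), rfl⟩
    · rintro ⟨Q, hQ⟩
      induction Q using Projectivization.ind with | h w hw => ?_
      rw [← mk_mem_pointsOn hv, ← hQ, Projectivization.map_mk, mk_mem_pointsOn]
      exact w.2
  rw [hrange, Set.ncard_range_of_injective hinj, Projectivization.card_of_finrank_two F L hL,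
    Nat.card_eq_fintype_card]

variable (b : Module.Basis (Fin 3) F (Fin 3 → F))

/-- The point with affine coordinates `P` in the frame `b`, whose line at infinity is spanned by
`b 1` and `b 2`. -/
noncomputable def affinePoint (P : F × F) : PGPoint F :=
  .mk F (b 0 + P.1 • b 1 + P.2 • b 2) fun h => by simpa using congr_arg (b.coord 0) h

/-- The common point at infinity of the affine lines of slope `y` in the frame `b`. -/
noncomputable def pointAtInfinity (y : F) : PGPoint F :=
  .mk F (b 1 + y • b 2) fun h => by simpa using congr_arg (b.coord 1) h

/-- The point at infinity of the frame `b` that is not of the form `pointAtInfinity b y`. -/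
noncomputable def verticalPoint : PGPoint F :=
  .mk F (b 2) (b.ne_zero 2)

/-- The line at infinity of the frame `b`. -/
noncomputable def lineAtInfinity : Submodule F (Fin 3 → F) :=
  (b.coord 0).ker

/-- The projective closure of the affine line with slope `y` and intercept `x` in the frame `b`. -/
noncomputable def slopeLine (y x : F) : Submodule F (Fin 3 → F) :=
  (b.coord 2 - y • b.coord 1 - x • b.coord 0).ker

theorem isProjLine_slopeLine (y x : F) : IsProjLine F (slopeLine b y x) :=
  isProjLine_ker fun h => by simpa using LinearMap.congr_fun h (b 2)

theorem isProjLine_lineAtInfinity : IsProjLine F (lineAtInfinity b) :=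
  isProjLine_ker fun h => by simpa using LinearMap.congr_fun h (b 0)

variable {b} {P : F × F} {x y y' : F}

theorem affinePoint_mem_slopeLine :
    affinePoint b P ∈ pointsOn (slopeLine b y x) ↔ intercept y P = x := by
  simp [affinePoint, slopeLine, mk_mem_pointsOn, intercept, sub_eq_zero, mul_comm]

theorem pointAtInfinity_mem_slopeLine :
    pointAtInfinity b y' ∈ pointsOn (slopeLine b y x) ↔ y' = y := by
  simp [pointAtInfinity, slopeLine, mk_mem_pointsOn, sub_eq_zero]

theorem verticalPoint_notMem_slopeLine : verticalPoint b ∉ pointsOn (slopeLine b y x) := by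
  simp [verticalPoint, slopeLine, mk_mem_pointsOn]

theorem affinePoint_notMem_lineAtInfinity : affinePoint b P ∉ pointsOn (lineAtInfinity b) := by
  simp [affinePoint, lineAtInfinity, mk_mem_pointsOn]

theorem pointAtInfinity_mem_lineAtInfinity :
    pointAtInfinity b y ∈ pointsOn (lineAtInfinity b) := by
  simp [pointAtInfinity, lineAtInfinity, mk_mem_pointsOn]

theorem verticalPoint_mem_lineAtInfinity : verticalPoint b ∈ pointsOn (lineAtInfinity b) := by
  simp [verticalPoint, lineAtInfinity, mk_mem_pointsOn]

theorem affinePoint_injective : Function.Injective (affinePoint b) := by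
  intro P P' h
  have hintercept (y : F) : intercept y P = intercept y P' := by
    rw [← affinePoint_mem_slopeLine (b := b), h, affinePoint_mem_slopeLine]
  have h0 := hintercept 0
  have h1 := hintercept 1
  simp only [intercept, mul_zero, sub_zero, mul_one] at h0 h1
  exact Prod.ext (by linear_combination h0 - h1) h0

theorem pointAtInfinity_injective : Function.Injective (pointAtInfinity b) := fun y y' h => by
  rw [← pointAtInfinity_mem_slopeLine (b := b) (x := 0), h, pointAtInfinity_mem_slopeLine]

theorem exists_eq_affinePoint_or_exists_eq_pointAtInfinity_or_eq_verticalPoint (Q : PGPoint F) :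
    (∃ P, Q = affinePoint b P) ∨ (∃ y, Q = pointAtInfinity b y) ∨ Q = verticalPoint b := by
  induction Q using Projectivization.ind with | h v hv => ?_
  simp only [affinePoint, pointAtInfinity, verticalPoint, Projectivization.mk_eq_mk_iff']
  have hsum : v = b.coord 0 v • b 0 + b.coord 1 v • b 1 + b.coord 2 v • b 2 := by
    simpa only [Fin.sum_univ_three, b.coord_apply] using (b.sum_repr v).symm
  obtain h0 | h0 := ne_or_eq (b.coord 0 v) 0
  · refine .inl ⟨(b.coord 1 v / b.coord 0 v, b.coord 2 v / b.coord 0 v), b.coord 0 v, ?_⟩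
    simpa only [smul_add, smul_smul, mul_div_cancel₀ _ h0] using hsum.symm
  obtain h1 | h1 := ne_or_eq (b.coord 1 v) 0
  · refine .inr (.inl ⟨b.coord 2 v / b.coord 1 v, b.coord 1 v, ?_⟩)
    simpa only [smul_add, smul_smul, mul_div_cancel₀ _ h1, h0, zero_smul, zero_add] using hsum.symm
  · refine .inr (.inr ⟨b.coord 2 v, ?_⟩)
    simpa only [h0, h1, zero_smul, zero_add] using hsum.symm

theorem eq_pointAtInfinity_or_exists_eq_affinePoint {Q : PGPoint F}
    (hQ : Q ∈ pointsOn (slopeLine b y x)) :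
    Q = pointAtInfinity b y ∨ ∃ P, Q = affinePoint b P ∧ intercept y P = x := by
  obtain ⟨P, rfl⟩ | ⟨y', rfl⟩ | rfl :=
    exists_eq_affinePoint_or_exists_eq_pointAtInfinity_or_eq_verticalPoint (b := b) Q
  · exact .inr ⟨P, rfl, affinePoint_mem_slopeLine.mp hQ⟩
  · exact .inl (congr_arg _ (pointAtInfinity_mem_slopeLine.mp hQ))
  · exact absurd hQ verticalPoint_notMem_slopeLine

theorem ncard_preimage_affinePoint (S : Set (PGPoint F)) :
    (affinePoint b ⁻¹' S).ncard = (S \ pointsOn (lineAtInfinity b)).ncard := by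
  have hpre : affinePoint b ⁻¹' S = affinePoint b ⁻¹' (S \ pointsOn (lineAtInfinity b)) := by
    ext P
    simp [affinePoint_notMem_lineAtInfinity]
  rw [hpre]
  refine Set.ncard_preimage_of_injective_subset_range affinePoint_injective ?_
  rintro Q ⟨-, hQ⟩
  obtain ⟨P, rfl⟩ | ⟨y, rfl⟩ | rfl :=
    exists_eq_affinePoint_or_exists_eq_pointAtInfinity_or_eq_verticalPoint (b := b) Q
  · exact ⟨P, rfl⟩
  · exact absurd pointAtInfinity_mem_lineAtInfinity hQ
  · exact absurd verticalPoint_mem_lineAtInfinity hQ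

theorem ncard_preimage_pointAtInfinity {S : Set (PGPoint F)} (hS : verticalPoint b ∉ S) :
    (pointAtInfinity b ⁻¹' S).ncard = (S ∩ pointsOn (lineAtInfinity b)).ncard := by
  have hpre : pointAtInfinity b ⁻¹' S =
      pointAtInfinity b ⁻¹' (S ∩ pointsOn (lineAtInfinity b)) := by
    ext y
    simp [pointAtInfinity_mem_lineAtInfinity]
  rw [hpre]
  refine Set.ncard_preimage_of_injective_subset_range pointAtInfinity_injective ?_
  rintro Q ⟨hQS, hQ⟩
  obtain ⟨P, rfl⟩ | ⟨y, rfl⟩ | rfl :=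
    exists_eq_affinePoint_or_exists_eq_pointAtInfinity_or_eq_verticalPoint (b := b) Q
  · exact absurd hQ affinePoint_notMem_lineAtInfinity
  · exact ⟨y, rfl⟩
  · exact absurd hQS hS

theorem IsProjLine.exists_basis {L : Submodule F (Fin 3 → F)} (hL : IsProjLine F L)
    {P Q : PGPoint F} (hP : P ∈ pointsOn L) (hQ : Q ∈ pointsOn L) (hPQ : P ≠ Q) :
    ∃ b : Module.Basis (Fin 3) F (Fin 3 → F),
      lineAtInfinity b = L ∧ pointAtInfinity b 0 = P ∧ verticalPoint b = Q := by
  have hli : LinearIndependent F ![P.rep, Q.rep] :=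
    Projectivization.linearIndependent_pair_iff_ne.mpr hPQ
  have hspan {M : Submodule F (Fin 3 → F)} (hM : IsProjLine F M) (hPM : P.rep ∈ M)
      (hQM : Q.rep ∈ M) : Submodule.span F (Set.range ![P.rep, Q.rep]) = M := by
    refine Submodule.eq_of_le_of_finrank_eq (Submodule.span_le.mpr ?_) ?_
    · simp [Set.insert_subset_iff, hPM, hQM]
    · rw [finrank_span_eq_card hli, Fintype.card_fin, hM]
  have hLspan := hspan hL ((mk_mem_pointsOn P.rep_nonzero).mp (P.mk_rep.symm ▸ hP))
    ((mk_mem_pointsOn Q.rep_nonzero).mp (Q.mk_rep.symm ▸ hQ))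
  obtain ⟨u, hu⟩ : ∃ u, u ∉ L := by
    by_contra! hall
    rw [IsProjLine, (Submodule.eq_top_iff').mpr hall, finrank_top, Module.finrank_fin_fun] at hL
    omega
  have hli3 : LinearIndependent F ![u, P.rep, Q.rep] := hli.finCons (hLspan ▸ hu)
  let b := basisOfLinearIndependentOfCardEqFinrank hli3 (by simp)
  have hb : ⇑b = ![u, P.rep, Q.rep] := coe_basisOfLinearIndependentOfCardEqFinrank _ _
  have hb1 : b 1 = P.rep := congr_fun hb 1
  have hb2 : b 2 = Q.rep := congr_fun hb 2
  refine ⟨b, (hspan (isProjLine_lineAtInfinity b) ?_ ?_).symm.trans hLspan, ?_, ?_⟩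
  · simp [lineAtInfinity, ← hb1]
  · simp [lineAtInfinity, ← hb2]
  · simp [pointAtInfinity, hb1]
  · simp [verticalPoint, hb2]

end Coordinates

section NoTangents

variable {S : Set (PGPoint F)} {L : Submodule F (Fin 3 → F)}

namespace NoTangents

theorem exists_ne (hS : NoTangents S) (hL : IsProjLine F L) {P : PGPoint F} (hP : P ∈ S)
    (hPL : P ∈ pointsOn L) : ∃ Q ∈ S, Q ∈ pointsOn L ∧ Q ≠ P := by
  by_contra! h
  exact hS L hL ⟨P, ⟨hP, hPL⟩, fun Q hQ => h Q hQ.1 hQ.2⟩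

variable {b : Module.Basis (Fin 3) F (Fin 3 → F)} {y : F}

theorem surjOn_intercept (hS : NoTangents S) (hy : pointAtInfinity b y ∈ S) :
    Set.SurjOn (intercept y) (affinePoint b ⁻¹' S) Set.univ := by
  intro x _
  obtain ⟨Q, hQS, hQ, hne⟩ := hS.exists_ne (isProjLine_slopeLine b y x) hy
    (pointAtInfinity_mem_slopeLine.mpr rfl)
  obtain rfl | ⟨P, rfl, hP⟩ := eq_pointAtInfinity_or_exists_eq_affinePoint hQ
  · exact absurd rfl hne
  · exact ⟨P, hQS, hP⟩

theorem exists_ne_intercept_eq (hS : NoTangents S) (hy : pointAtInfinity b y ∉ S) {P : F × F}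
    (hP : affinePoint b P ∈ S) :
    ∃ P', affinePoint b P' ∈ S ∧ P' ≠ P ∧ intercept y P' = intercept y P := by
  obtain ⟨Q, hQS, hQ, hne⟩ := hS.exists_ne (isProjLine_slopeLine b y (intercept y P)) hP
    (affinePoint_mem_slopeLine.mpr rfl)
  obtain rfl | ⟨P', rfl, hP'⟩ := eq_pointAtInfinity_or_exists_eq_affinePoint hQ
  · exact absurd hQS hy
  · exact ⟨P', hQS, fun h => hne (h ▸ rfl), hP'⟩

variable [Fintype F]

theorem card_le_ncard_sdiff (hS : NoTangents S) (hL : IsProjLine F L)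
    (hne : (S ∩ pointsOn L).Nonempty) : Fintype.card F ≤ (S \ pointsOn L).ncard := by
  obtain ⟨P, hPS, hP⟩ := hne
  obtain ⟨Q, hQS, hQ, hQP⟩ := hS.exists_ne hL hPS hP
  obtain ⟨b, rfl, rfl, rfl⟩ := hL.exists_basis hP hQ hQP.symm
  have himage := Set.univ_subset_iff.mp (hS.surjOn_intercept hPS)
  rw [← ncard_preimage_affinePoint, ← Nat.card_eq_fintype_card, ← Set.ncard_univ, ← himage]
  exact Set.ncard_image_le

theorem ncard_inter_add_card_le (hS : NoTangents S) (hL : IsProjLine F L)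
    (hne : (S ∩ pointsOn L).Nonempty) :
    (S ∩ pointsOn L).ncard + Fintype.card F ≤ S.ncard := by
  rw [← Set.ncard_inter_add_ncard_sdiff_eq_ncard S (pointsOn L)]
  exact Nat.add_le_add_left (hS.card_le_ncard_sdiff hL hne) _

theorem card_le_ncard (hS : NoTangents S) (hne : S.Nonempty) : Fintype.card F ≤ S.ncard := by
  obtain ⟨P, hP⟩ := hne
  obtain ⟨L, hL, hPL⟩ := exists_isProjLine_mem_pointsOn P
  exact le_of_add_le_right (hS.ncard_inter_add_card_le hL ⟨P, hP, hPL⟩)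

theorem two_mul_card_le_ncard_of_surjOn (hS : NoTangents S) (hy : pointAtInfinity b y ∉ S)
    (hsurj : Set.SurjOn (intercept y) (affinePoint b ⁻¹' S) Set.univ) :
    2 * Fintype.card F ≤ S.ncard := by
  classical
  have hfibre (x : F) : 2 ≤ {P ∈ (affinePoint b ⁻¹' S).toFinset | intercept y P = x}.card := by
    obtain ⟨P, hP, rfl⟩ := hsurj (Set.mem_univ x)
    obtain ⟨P', hP', hne, heq⟩ := hS.exists_ne_intercept_eq hy hP
    refine Finset.one_lt_card.mpr ⟨P', ?_, P, ?_, hne⟩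
    · simpa using ⟨hP', heq⟩
    · simpa using hP
  have hcard := Finset.mul_card_image_le_card_of_maps_to
    (fun P _ => Finset.mem_univ (intercept y P)) 2 fun x _ => hfibre x
  rw [Finset.card_univ, ← Set.ncard_eq_toFinset_card', ncard_preimage_affinePoint] at hcard
  exact hcard.trans (Set.ncard_le_ncard Set.sdiff_subset)

theorem two_mul_card_le_ncard_of_forall_affinePoint_mem {x : F} (hS : NoTangents S)
    (h : ∀ P, intercept y P = x → affinePoint b P ∈ S) : 2 * Fintype.card F ≤ S.ncard := by
  let φ (a : F) : PGPoint F := affinePoint b (a, x + a * y)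
  have hφ : Function.Injective φ := fun a a' h => congr_arg Prod.fst (affinePoint_injective h)
  have hmem (a : F) : φ a ∈ S ∩ pointsOn (slopeLine b y x) := by
    have ha : intercept y (a, x + a * y) = x := add_sub_cancel_right x _
    exact ⟨h _ ha, affinePoint_mem_slopeLine.mpr ha⟩
  have hcard : Fintype.card F ≤ (S ∩ pointsOn (slopeLine b y x)).ncard := by
    rw [← Nat.card_eq_fintype_card, ← Set.ncard_range_of_injective hφ]
    exact Set.ncard_le_ncard (Set.range_subset_iff.mpr hmem)
  have := hS.ncard_inter_add_card_le (isProjLine_slopeLine b y x) ⟨φ 0, hmem 0⟩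
  omega

theorem surjOn_intercept_or_exists_forall_affinePoint_mem (hS : NoTangents S)
    (hq : (Fintype.card F).Prime) (hv : verticalPoint b ∉ S)
    (haff : Fintype.card F ≤ (S \ pointsOn (lineAtInfinity b)).ncard)
    (hinf : 2 * (S \ pointsOn (lineAtInfinity b)).ncard ≤
      2 * (S ∩ pointsOn (lineAtInfinity b)).ncard + Fintype.card F) (y : F) :
    Set.SurjOn (intercept y) (affinePoint b ⁻¹' S) Set.univ ∨
      ∃ x, ∀ P, intercept y P = x → affinePoint b P ∈ S := by
  classical
  simp only [← ncard_preimage_affinePoint, ← ncard_preimage_pointAtInfinity hv,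
    Set.ncard_eq_toFinset_card'] at haff hinf
  simpa only [Set.coe_toFinset, Set.mem_toFinset, Set.mem_preimage] using
    surjOn_intercept_or_exists_forall_mem hq haff hinf
      (fun z hz => by simpa using hS.surjOn_intercept (by simpa using hz)) y

end NoTangents

theorem exists_mem_pointsOn_notMem [Fintype F] (hL : IsProjLine F L)
    (h : (S ∩ pointsOn L).ncard ≤ Fintype.card F) : ∃ Q ∈ pointsOn L, Q ∉ S := by
  by_contra! hsub
  rw [Set.inter_eq_right.mpr hsub, ncard_pointsOn hL] at h
  omega

theorem exists_pointAtInfinity_notMem [Fintype F] {b : Module.Basis (Fin 3) F (Fin 3 → F)}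
    (h : (S ∩ pointsOn (lineAtInfinity b)).ncard < Fintype.card F) :
    ∃ y, pointAtInfinity b y ∉ S := by
  by_contra! hall
  have hsub : Set.range (pointAtInfinity b) ⊆ S ∩ pointsOn (lineAtInfinity b) :=
    Set.range_subset_iff.mpr fun y => ⟨hall y, pointAtInfinity_mem_lineAtInfinity⟩
  have hcard := Set.ncard_le_ncard hsub
  rw [Set.ncard_range_of_injective pointAtInfinity_injective, Nat.card_eq_fintype_card] at hcard
  exact h.not_ge hcard

theorem stmt_8_general [Fintype F] (hq : (Fintype.card F).Prime) (hne : S.Nonempty)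
    (hS : NoTangents S) (hsize : S.ncard < 2 * Fintype.card F) (hL : IsProjLine F L) :
    4 * (S ∩ pointsOn L).ncard + Fintype.card F < 2 * S.ncard := by
  obtain hempty | hmeet := (S ∩ pointsOn L).eq_empty_or_nonempty
  · rw [hempty, Set.ncard_empty]
    linarith [hS.card_le_ncard hne, hq.pos]
  by_contra! hle
  have hsum := Set.ncard_inter_add_ncard_sdiff_eq_ncard S (pointsOn L)
  have hinter := hS.ncard_inter_add_card_le hL hmeet
  have haff := hS.card_le_ncard_sdiff hL hmeet
  obtain ⟨P, hPS, hP⟩ := hmeet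
  obtain ⟨Q, hQ, hQS⟩ := exists_mem_pointsOn_notMem (S := S) hL (by omega)
  obtain ⟨b, rfl, -, rfl⟩ := hL.exists_basis hP hQ (ne_of_mem_of_not_mem hPS hQS)
  obtain ⟨y, hy⟩ := exists_pointAtInfinity_notMem (S := S) (b := b) (by omega)
  refine hsize.not_ge ?_
  obtain hsurj | ⟨x, hx⟩ :=
    hS.surjOn_intercept_or_exists_forall_affinePoint_mem hq hQS haff (by omega) y
  · exact hS.two_mul_card_le_ncard_of_surjOn hy hsurj
  · exact hS.two_mul_card_le_ncard_of_forall_affinePoint_mem hx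

end NoTangents

/-- a non-empty set without tangents `S` in `PG(2,p)` with
`|S| < 2p` meets every line in at most `|S|/2 - (p-5)/4` points, i.e.
`4·|L ∩ S| ≤ 2|S| - p + 5` for every line `L`. -/
theorem stmt_8 [Fintype F] (p : ℕ) (hp : p.Prime) (hcard : Fintype.card F = p)
    (S : Set (PGPoint F)) (hne : S.Nonempty) (hS : NoTangents S)
    (hsize : S.ncard < 2 * p)
    (L : Submodule F (Fin 3 → F)) (hL : IsProjLine F L) :
    4 * (S ∩ pointsOn L).ncard + p ≤ 2 * S.ncard + 5 := by
  subst hcard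
  have := stmt_8_general hp hne hS hsize hL
  omega
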